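/- Let D ≥ 2, L ≥ 1 be integers, K = L^D, and for each N ≥ 1 let ρ_N be the pushforward of the product Haar measure on U(N) gauge configurations under the normalized Wilson action t. Define m_l = 0 for odd l and m_l = (l−1)!! / (4K/(D(D−1)))^{l/2} for even l. Then for every fixed l ≥ 1, the l-th moment of ρ_N satisfies ∫ t^l dρ_N(t) = m_l / N^l + O(1/N^{l+1}) as N → ∞; that is, there exist a constant C > 0 and N₀ such that |N^l ∫ t^l dρ_N − m_l| ≤ C/N for all N ≥ N₀. -/

import Mathlib

open MeasureTheory Matrix Finset Filter
open scoped Nat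

noncomputable section

/-- Borel measurable structure on the unitary group `U(N)`. -/
instance (N : ℕ) : MeasurableSpace (Matrix.unitaryGroup (Fin N) ℂ) := borel _

instance (N : ℕ) : BorelSpace (Matrix.unitaryGroup (Fin N) ℂ) := ⟨rfl⟩

/-- Sites of the `D`-dimensional periodic lattice of side `L`: the discrete torus `(ℤ/Lℤ)^D`. -/
abbrev Site (D L : ℕ) := Fin D → ZMod L

/-- Edges: a site together with a positive coordinate direction. -/
abbrev Edge (D L : ℕ) := Site D L × Fin D

/-- Lattice gauge configurations: a unitary matrix `U_{x,μ} ∈ U(N)` on every edge. -/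
abbrev Conf (D L N : ℕ) := Edge D L → Matrix.unitaryGroup (Fin N) ℂ

/-- The site displaced one step from `x` in direction `μ`. -/
def shift {D L : ℕ} (x : Site D L) (μ : Fin D) : Site D L :=
  Function.update x μ (x μ + 1)

/-- The normalized Wilson action
`t(U) = (1/K) Σ_x Σ_{μ<ν} (1/N) Re Tr (U_{x,ν}† U_{x+ν,μ}† U_{x+μ,ν} U_{x,μ})`, with `K = L^D`. -/
def wilsonAction (D L N : ℕ) [NeZero L] (U : Conf D L N) : ℝ :=
  ((L : ℝ) ^ D)⁻¹ *
    ∑ x : Site D L, ∑ p ∈ Finset.univ.filter (fun p : Fin D × Fin D => p.1 < p.2),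
      (N : ℝ)⁻¹ *
        (Matrix.trace ((U (x, p.2) : Matrix (Fin N) (Fin N) ℂ)ᴴ
          * (U (shift x p.2, p.1) : Matrix (Fin N) (Fin N) ℂ)ᴴ
          * (U (shift x p.1, p.2) : Matrix (Fin N) (Fin N) ℂ)
          * (U (x, p.1) : Matrix (Fin N) (Fin N) ℂ))).re

/-- The product over all edges of the measure `haarU` on `U(N)`. -/
def confMeasure (D L N : ℕ) [NeZero L]
    (haarU : Measure (Matrix.unitaryGroup (Fin N) ℂ)) : Measure (Conf D L N) :=
  Measure.pi fun _ => haarU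

/-!
Left invariance of the Haar measure under `U e ↦ exp (i t H) U e` gives the Schwinger–Dyson (loop)
equations for expectations of products of Wilson loops `Tr U(w)`: varying `w` at the letters on one
edge either cuts `w` into two loops or splices `w` into another loop of the product. If `w` has
minimal length in its conjugacy class and its first or last letter is varied, exactly one cut is
trivial, and it contributes `N` times the original expectation.

An induction on the total length of the words then bounds the expectations of products of
homotopically nontrivial loops uniformly in `N`: a trivial splice costs a factor `N` but leaves a
strictly shorter product, and the other terms, which keep the total length, are absorbed once `N` is
at least twice that length.

Hence, up to `O(1/N)`, only the trivial splices survive the loop equation divided by `N`, and a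
finite sum of Wilson loops satisfies the moment recursion of a Gaussian, with variance the
sum of the pairwise contractions. A plaquette contracts exactly with its reversal, so `2 K N t`, the
sum over the `K D (D - 1)` oriented plaquettes, is asymptotically Gaussian with variance
`K D (D - 1)`.
-/

/-- Gauge fields with structure group `U(N)` on an arbitrary set `E` of edges. -/
abbrev GaugeField (E : Type*) (N : ℕ) := E → Matrix.unitaryGroup (Fin N) ℂ

/-- Words in the edges; the letter `(e, true)` stands for `e` and `(e, false)` for its inverse, as
in `FreeGroup E`. -/
abbrev Word (E : Type*) := List (E × Bool)

section UnitaryGroup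

variable {N : ℕ}

instance compactSpace_unitaryGroup : CompactSpace (Matrix.unitaryGroup (Fin N) ℂ) := by
  have hsub : (Matrix.unitaryGroup (Fin N) ℂ : Set (Matrix (Fin N) (Fin N) ℂ)) ⊆
      Set.univ.pi fun _ => Set.univ.pi fun _ => Metric.closedBall (0 : ℂ) 1 :=
    fun U hU i _ j _ => by simpa using entry_norm_bound_of_unitary hU i j
  have hclosed : IsClosed (Matrix.unitaryGroup (Fin N) ℂ : Set (Matrix (Fin N) (Fin N) ℂ)) :=
    isClosed_unitary
  exact isCompact_iff_compactSpace.mp <| (isCompact_univ_pi fun _ => isCompact_univ_pi fun _ =>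
    isCompact_closedBall (0 : ℂ) 1).of_isClosed_subset hclosed hsub

instance secondCountableTopology_unitaryGroup :
    SecondCountableTopology (Matrix.unitaryGroup (Fin N) ℂ) :=
  have : SecondCountableTopology (Matrix (Fin N) (Fin N) ℂ) :=
    inferInstanceAs (SecondCountableTopology (Fin N → Fin N → ℂ))
  TopologicalSpace.Subtype.secondCountableTopology _

lemma integrable_of_continuous_gaugeField {E : Type*} [Countable E] {μ : Measure (GaugeField E N)}
    [IsFiniteMeasure μ] {g : GaugeField E N → ℂ} (hg : Continuous g) : Integrable g μ :=
  hg.integrable_of_hasCompactSupport (HasCompactSupport.of_compactSpace g)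

end UnitaryGroup

section WilsonLoops

variable {E : Type*} {N : ℕ}

/-- The holonomy of the gauge field `U` along the word `w`. -/
def holonomy (U : GaugeField E N) (w : Word E) : Matrix (Fin N) (Fin N) ℂ :=
  (FreeGroup.lift U (FreeGroup.mk w) : Matrix.unitaryGroup (Fin N) ℂ)

/-- The Wilson loop observable: the unnormalized trace of the holonomy. -/
def loopTrace (U : GaugeField E N) (w : Word E) : ℂ := (holonomy U w).trace

@[simp]
lemma holonomy_nil (U : GaugeField E N) : holonomy U [] = 1 := by
  simp [holonomy, ← FreeGroup.one_eq_mk]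

lemma holonomy_append (U : GaugeField E N) (v w : Word E) :
    holonomy U (v ++ w) = holonomy U v * holonomy U w := by
  simp [holonomy, ← FreeGroup.mul_mk]

lemma holonomy_cons (U : GaugeField E N) (a : E × Bool) (w : Word E) :
    holonomy U (a :: w) = holonomy U [a] * holonomy U w :=
  holonomy_append U [a] w

@[simp]
lemma holonomy_singleton_true (U : GaugeField E N) (e : E) : holonomy U [(e, true)] = U e := by
  simp [holonomy]

@[simp]
lemma holonomy_singleton_false (U : GaugeField E N) (e : E) :
    holonomy U [(e, false)] = (U e : Matrix (Fin N) (Fin N) ℂ)ᴴ := by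
  simp [holonomy, Matrix.star_eq_conjTranspose]

lemma continuous_holonomy (w : Word E) : Continuous fun U : GaugeField E N => holonomy U w := by
  induction w with
  | nil => simpa using continuous_const
  | cons a w ih =>
    have hval (e : E) : Continuous fun U : GaugeField E N => (U e : Matrix (Fin N) (Fin N) ℂ) :=
      continuous_subtype_val.comp (continuous_apply e)
    simp_rw [holonomy_cons _ a w]
    refine Continuous.mul ?_ ih
    obtain ⟨e, _ | _⟩ := a
    · simpa using (hval e).matrix_conjTranspose
    · simpa using hval e

lemma continuous_loopTrace (w : Word E) : Continuous fun U : GaugeField E N => loopTrace U w :=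
  (continuous_holonomy w).matrix_trace

lemma loopTrace_of_mk_eq_one (U : GaugeField E N) {w : Word E} (h : FreeGroup.mk w = 1) :
    loopTrace U w = N := by
  simp [loopTrace, holonomy, h]

lemma loopTrace_eq_of_isConj (U : GaugeField E N) {v w : Word E}
    (h : IsConj (FreeGroup.mk v) (FreeGroup.mk w)) : loopTrace U v = loopTrace U w := by
  obtain ⟨c, hc⟩ := isConj_iff.1 h
  obtain ⟨c, rfl⟩ := Quot.exists_rep c
  have hw : holonomy U w = holonomy U c * holonomy U v * holonomy U (FreeGroup.invRev c) := by
    rw [← holonomy_append, ← holonomy_append, holonomy, holonomy, ← hc]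
    rfl
  rw [loopTrace, loopTrace, hw, mul_assoc, Matrix.trace_mul_comm, mul_assoc, ← holonomy_append]
  simp [holonomy, ← FreeGroup.mul_mk, ← FreeGroup.inv_mk]

lemma norm_loopTrace_le (U : GaugeField E N) (w : Word E) : ‖loopTrace U w‖ ≤ N := by
  have hentry (i : Fin N) : ‖holonomy U w i i‖ ≤ 1 :=
    entry_norm_bound_of_unitary (FreeGroup.lift U (FreeGroup.mk w)).2 i i
  calc ‖loopTrace U w‖ ≤ ∑ i, ‖holonomy U w i i‖ :=
        norm_sum_le (f := fun i => holonomy U w i i) Finset.univ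
    _ ≤ ∑ _i : Fin N, (1 : ℝ) := Finset.sum_le_sum fun i _ => hentry i
    _ = N := by simp

/-- The product of the Wilson loops of a multiset of words. -/
def loopProd (U : GaugeField E N) (S : Multiset (Word E)) : ℂ := (S.map (loopTrace U)).prod

@[simp]
lemma loopProd_zero (U : GaugeField E N) : loopProd U 0 = 1 := by
  simp [loopProd]

@[simp]
lemma loopProd_cons (U : GaugeField E N) (w : Word E) (S : Multiset (Word E)) :
    loopProd U (w ::ₘ S) = loopTrace U w * loopProd U S := by
  simp [loopProd]

lemma loopProd_map_val {ι : Type*} (U : GaugeField E N) (s : Finset ι) (p : ι → Word E) :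
    loopProd U (s.val.map p) = ∏ i ∈ s, loopTrace U (p i) := by
  simp [loopProd]

lemma continuous_loopProd (S : Multiset (Word E)) :
    Continuous fun U : GaugeField E N => loopProd U S :=
  continuous_multiset_prod _ fun w _ => continuous_loopTrace w

lemma norm_loopProd_le (U : GaugeField E N) (S : Multiset (Word E)) :
    ‖loopProd U S‖ ≤ (N : ℝ) ^ S.card := by
  induction S using Multiset.induction_on with
  | empty => simp
  | cons w S ih =>
    rw [loopProd_cons, norm_mul, Multiset.card_cons, pow_succ']
    exact mul_le_mul (norm_loopTrace_le U w) ih (norm_nonneg _) (Nat.cast_nonneg _)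

end WilsonLoops

section Cuts

variable {E : Type*}

/-- Where `X` is inserted in `w` when its `k`-th letter is varied by `δU = X U`: to the left of a
positive letter, and to the right of an inverse letter because `δ(U⁻¹) = -U⁻¹ X`. -/
def cutPos (w : Word E) (k : Fin w.length) : ℕ := if w[k].2 then k else k + 1

/-- The part of `w` to the left of `cutPos w k`. -/
def cutLeft (w : Word E) (k : Fin w.length) : Word E := w.take (cutPos w k)

/-- The part of `w` to the right of `cutPos w k`. -/
def cutRight (w : Word E) (k : Fin w.length) : Word E := w.drop (cutPos w k)

/-- The word `v` with `w` inserted at `cutPos v k`. -/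
def splice (v : Word E) (k : Fin v.length) (w : Word E) : Word E :=
  cutLeft v k ++ w ++ cutRight v k

lemma cutLeft_append_cutRight (w : Word E) (k : Fin w.length) : cutLeft w k ++ cutRight w k = w :=
  List.take_append_drop _ _

lemma length_cutLeft_add_length_cutRight (w : Word E) (k : Fin w.length) :
    (cutLeft w k).length + (cutRight w k).length = w.length := by
  rw [← List.length_append, cutLeft_append_cutRight]

lemma length_splice (v : Word E) (k : Fin v.length) (w : Word E) :
    (splice v k w).length = v.length + w.length := by
  have := length_cutLeft_add_length_cutRight v k
  simp only [splice, List.length_append]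
  omega

lemma cutLeft_cons_succ (a : E × Bool) (w : Word E) (k : Fin w.length) :
    cutLeft (a :: w) k.succ = a :: cutLeft w k := by
  simp only [cutLeft, cutPos, Fin.val_succ, Fin.getElem_fin, List.getElem_cons_succ]
  split_ifs <;> rfl

lemma cutRight_cons_succ (a : E × Bool) (w : Word E) (k : Fin w.length) :
    cutRight (a :: w) k.succ = cutRight w k := by
  simp only [cutRight, cutPos, Fin.val_succ, Fin.getElem_fin, List.getElem_cons_succ]
  split_ifs <;> rfl

lemma cutLeft_eq_nil_iff (w : Word E) (k : Fin w.length) :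
    cutLeft w k = [] ↔ (k : ℕ) = 0 ∧ w[k].2 = true := by
  have hw : w ≠ [] := List.ne_nil_of_length_pos k.pos
  simp only [cutLeft, cutPos, List.take_eq_nil_iff, hw, or_false]
  split_ifs with h <;> simp only [h] <;> simp

lemma cutRight_eq_nil_iff (w : Word E) (k : Fin w.length) :
    cutRight w k = [] ↔ (k : ℕ) + 1 = w.length ∧ w[k].2 = false := by
  have hk := k.2
  simp only [cutRight, cutPos, List.drop_eq_nil_iff]
  split_ifs with h <;> simp only [h] <;> simp
  omega

/-- The letter `k₀` of `w` is a pivot if the cut at `k₀` is trivial, while the cut at any other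
letter with the same edge decomposes `w` into two nontrivial elements of the free group. -/
structure IsPivot (w : Word E) (k₀ : Fin w.length) : Prop where
  cut_eq_nil : cutLeft w k₀ = [] ∨ cutRight w k₀ = []
  mk_cut_ne_one : ∀ k ≠ k₀, w[k].1 = w[k₀].1 →
    FreeGroup.mk (cutLeft w k) ≠ 1 ∧ FreeGroup.mk (cutRight w k) ≠ 1

/-- A shortest word representing a given conjugacy class of the free group. -/
def IsConjMinimal (w : Word E) : Prop :=
  ∀ v : Word E, IsConj (FreeGroup.mk v) (FreeGroup.mk w) → w.length ≤ v.length

lemma IsConjMinimal.mk_ne_one_of_append {u v : Word E} (h : IsConjMinimal (u ++ v)) (hu : u ≠ [])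
    (hv : v ≠ []) : FreeGroup.mk u ≠ 1 ∧ FreeGroup.mk v ≠ 1 := by
  have hu' := List.length_pos_of_ne_nil hu
  have hv' := List.length_pos_of_ne_nil hv
  constructor <;> intro h1
  · have := h v (by rw [← FreeGroup.mul_mk, h1, one_mul])
    rw [List.length_append] at this
    omega
  · have := h u (by rw [← FreeGroup.mul_mk, h1, mul_one])
    rw [List.length_append] at this
    omega

lemma not_isConjMinimal_conjugate (e : E) (b : Bool) (w : Word E) :
    ¬ IsConjMinimal ((e, b) :: w ++ [(e, !b)]) := by
  intro h
  have hconj : IsConj (FreeGroup.mk w) (FreeGroup.mk ((e, b) :: w ++ [(e, !b)])) :=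
    isConj_iff.2 ⟨FreeGroup.mk [(e, b)], by simp [FreeGroup.invRev]⟩
  have := h w hconj
  simp at this

lemma isConj_mk_append_comm (u v : Word E) :
    IsConj (FreeGroup.mk (u ++ v)) (FreeGroup.mk (v ++ u)) :=
  isConj_iff.2 ⟨FreeGroup.mk v, by
    rw [← FreeGroup.mul_mk, ← FreeGroup.mul_mk, mul_assoc, mul_assoc, mul_inv_cancel, mul_one]⟩

lemma IsConjMinimal.of_isConj {v w : Word E} (h : IsConjMinimal w)
    (hconj : IsConj (FreeGroup.mk v) (FreeGroup.mk w)) (hlen : v.length = w.length) :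
    IsConjMinimal v :=
  fun u hu => hlen ▸ h u (hu.trans hconj)

lemma exists_isConjMinimal (w : Word E) :
    ∃ v : Word E, IsConjMinimal v ∧ IsConj (FreeGroup.mk v) (FreeGroup.mk w) := by
  obtain ⟨v, hv, hmin⟩ := (measure List.length).wf.has_min
    {v : Word E | IsConj (FreeGroup.mk v) (FreeGroup.mk w)} ⟨w, IsConj.refl _⟩
  exact ⟨v, fun u hu => not_lt.1 (hmin u (hu.trans hv)), hv⟩

lemma IsConjMinimal.edge_ne {w : Word E} (h : IsConjMinimal w) {j k : Fin w.length}
    (hj : cutLeft w j = []) (hk : cutRight w k = []) : w[j].1 ≠ w[k].1 := by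
  intro he
  obtain ⟨hj0, hjb⟩ := (cutLeft_eq_nil_iff w j).1 hj
  obtain ⟨hk1, hkb⟩ := (cutRight_eq_nil_iff w k).1 hk
  obtain _ | ⟨⟨e, b⟩, v⟩ := w
  · exact j.elim0
  obtain rfl : j = ⟨0, by simp⟩ := Fin.ext hj0
  obtain rfl : k = ⟨v.length, by simp⟩ := Fin.ext (by simpa using hk1)
  obtain rfl | ⟨u, ⟨e', b'⟩, rfl⟩ := List.eq_nil_or_concat v
  · simp_all
  · have := not_isConjMinimal_conjugate e true u
    simp_all

lemma IsConjMinimal.isPivot {w : Word E} (h : IsConjMinimal w) {k₀ : Fin w.length}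
    (h₀ : cutLeft w k₀ = [] ∨ cutRight w k₀ = []) : IsPivot w k₀ where
  cut_eq_nil := h₀
  mk_cut_ne_one k hk he := by
    refine IsConjMinimal.mk_ne_one_of_append ((cutLeft_append_cutRight w k).symm ▸ h) ?_ ?_
    · intro hleft
      obtain h₀ | h₀ := h₀
      · exact hk (Fin.ext (((cutLeft_eq_nil_iff w k).1 hleft).1.trans
          ((cutLeft_eq_nil_iff w k₀).1 h₀).1.symm))
      · exact h.edge_ne hleft h₀ he
    · intro hright
      obtain h₀ | h₀ := h₀
      · exact h.edge_ne h₀ hright he.symm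
      · have hlast := (cutRight_eq_nil_iff w k).1 hright
        have hlast₀ := (cutRight_eq_nil_iff w k₀).1 h₀
        exact hk (Fin.ext (by omega))

lemma exists_isPivot {w : Word E} (hw : FreeGroup.mk w ≠ 1) :
    ∃ (v : Word E) (k₀ : Fin v.length), IsPivot v k₀ ∧ v.length ≤ w.length ∧
      IsConj (FreeGroup.mk v) (FreeGroup.mk w) := by
  obtain ⟨v, hmin, hconj⟩ := exists_isConjMinimal w
  have hlen : v.length ≤ w.length := hmin w hconj.symm
  obtain _ | ⟨⟨e, _ | _⟩, u⟩ := v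
  · exact absurd (isConj_one_right.1 hconj) hw
  · have hrot := isConj_mk_append_comm u [(e, false)]
    refine ⟨u ++ [(e, false)], ⟨u.length, by simp⟩, ?_, by simpa using hlen, hrot.trans hconj⟩
    exact (hmin.of_isConj hrot (by simp)).isPivot
      (Or.inr ((cutRight_eq_nil_iff _ _).2 ⟨by simp, by simp⟩))
  · exact ⟨(e, true) :: u, ⟨0, by simp⟩,
      hmin.isPivot (Or.inl ((cutLeft_eq_nil_iff _ _).2 ⟨rfl, rfl⟩)), hlen, hconj⟩

lemma mk_eq_mk_iff_of_isReduced {v w : Word E} (hv : FreeGroup.IsReduced v)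
    (hw : FreeGroup.IsReduced w) : FreeGroup.mk v = FreeGroup.mk w ↔ v = w := by
  classical
  refine ⟨fun h => ?_, fun h => h ▸ rfl⟩
  simpa only [FreeGroup.toWord_mk, hv.reduce_eq, hw.reduce_eq] using congrArg FreeGroup.toWord h

lemma mk_ne_one_of_isReduced {w : Word E} (hw : FreeGroup.IsReduced w)
    (hne : w ≠ []) : FreeGroup.mk w ≠ 1 := by
  rwa [FreeGroup.one_eq_mk, ne_eq, mk_eq_mk_iff_of_isReduced hw FreeGroup.IsReduced.nil]

lemma mk_splice_eq_one_iff {v w : Word E} {k : Fin v.length}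
    (hw : FreeGroup.IsReduced w)
    (hv : FreeGroup.IsReduced (FreeGroup.invRev (cutRight v k ++ cutLeft v k))) :
    FreeGroup.mk (splice v k w) = 1 ↔ w = FreeGroup.invRev (cutRight v k ++ cutLeft v k) := by
  rw [splice, ← mk_eq_mk_iff_of_isReduced hw hv, ← FreeGroup.inv_mk, ← FreeGroup.mul_mk,
    ← FreeGroup.mul_mk, ← FreeGroup.mul_mk, eq_inv_iff_mul_eq_one, ← mul_assoc, mul_assoc,
    mul_eq_one_comm]

end Cuts

section Variation

variable {E : Type*} [DecidableEq E] {N : ℕ}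

/-- The sign of the contribution of the letter `a` to a variation of the edge `e`. -/
def letterSign (e : E) (a : E × Bool) : ℂ := if a.1 = e then (if a.2 then 1 else -1) else 0

lemma norm_letterSign_le (e : E) (a : E × Bool) : ‖letterSign e a‖ ≤ 1 := by
  unfold letterSign
  split_ifs <;> simp

lemma letterSign_of_ne {e : E} {a : E × Bool} (h : a.1 ≠ e) : letterSign e a = 0 := if_neg h

lemma letterSign_mul_self (a : E × Bool) : letterSign a.1 a * letterSign a.1 a = 1 := by
  unfold letterSign
  split_ifs <;> simp_all

lemma norm_letterSign_self (a : E × Bool) : ‖letterSign a.1 a‖ = 1 := by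
  unfold letterSign
  split_ifs <;> simp_all

lemma norm_letterSign_mul_le {e : E} {a : E × Bool} {z : ℂ} {B : ℝ} (hB : 0 ≤ B)
    (hz : a.1 = e → ‖z‖ ≤ B) : ‖letterSign e a * z‖ ≤ B := by
  by_cases he : a.1 = e
  · rw [norm_mul]
    exact (mul_le_of_le_one_left (norm_nonneg _) (norm_letterSign_le e a)).trans (hz he)
  · rwa [letterSign_of_ne he, zero_mul, norm_zero]

/-- The linear response `X ↦ δU(w)` of the holonomy along `w` to the variation `δU e = X * U e` of
the gauge field on the edge `e`. -/
def holonomyVar (e : E) (w : Word E) (U : GaugeField E N) :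
    Matrix (Fin N) (Fin N) ℂ →ₗ[ℂ] Matrix (Fin N) (Fin N) ℂ :=
  ∑ k : Fin w.length, letterSign e w[k] •
    LinearMap.mulLeftRight ℂ (holonomy U (cutLeft w k), holonomy U (cutRight w k))

lemma holonomyVar_apply (e : E) (w : Word E) (U : GaugeField E N) (X : Matrix (Fin N) (Fin N) ℂ) :
    holonomyVar e w U X = ∑ k : Fin w.length, letterSign e w[k] •
      (holonomy U (cutLeft w k) * X * holonomy U (cutRight w k)) := by
  simp [holonomyVar]

lemma holonomyVar_singleton_true (e : E) (U : GaugeField E N) (X : Matrix (Fin N) (Fin N) ℂ) :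
    holonomyVar e [(e, true)] U X = X * U e := by
  simp [holonomyVar_apply, letterSign, cutLeft, cutRight, cutPos]

lemma holonomyVar_singleton_false (e : E) (U : GaugeField E N) (X : Matrix (Fin N) (Fin N) ℂ) :
    holonomyVar e [(e, false)] U X = -((U e : Matrix (Fin N) (Fin N) ℂ)ᴴ * X) := by
  simp [holonomyVar_apply, letterSign, cutLeft, cutRight, cutPos]

lemma holonomyVar_singleton_of_ne {e : E} {a : E × Bool} (h : a.1 ≠ e) (U : GaugeField E N)
    (X : Matrix (Fin N) (Fin N) ℂ) : holonomyVar e [a] U X = 0 := by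
  simp [holonomyVar_apply, letterSign_of_ne h]

lemma holonomyVar_cons (e : E) (a : E × Bool) (w : Word E) (U : GaugeField E N)
    (X : Matrix (Fin N) (Fin N) ℂ) :
    holonomyVar e (a :: w) U X =
      holonomyVar e [a] U X * holonomy U w + holonomy U [a] * holonomyVar e w U X := by
  have hhead : letterSign e a • (holonomy U (cutLeft (a :: w) (0 : Fin (w.length + 1))) * X *
      holonomy U (cutRight (a :: w) (0 : Fin (w.length + 1)))) =
      holonomyVar e [a] U X * holonomy U w := by
    obtain ⟨e', _ | _⟩ := a
    · simp [holonomyVar_apply, cutLeft, cutRight, cutPos]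
    · simp [holonomyVar_apply, cutLeft, cutRight, cutPos, holonomy_cons U _ w, mul_assoc]
  rw [holonomyVar_apply, ← hhead, holonomyVar_apply e w, Finset.mul_sum]
  refine (Fin.sum_univ_succ _).trans (congrArg₂ _ rfl (Finset.sum_congr rfl fun k _ => ?_))
  rw [cutLeft_cons_succ, cutRight_cons_succ, holonomy_cons U a (cutLeft w k)]
  simp [mul_assoc]

lemma continuous_holonomyVar (e : E) (w : Word E) (X : Matrix (Fin N) (Fin N) ℂ) :
    Continuous fun U : GaugeField E N => holonomyVar e w U X := by
  simp_rw [holonomyVar_apply]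
  refine continuous_finsetSum _ fun k _ => ?_
  exact Continuous.const_smul
    (((continuous_holonomy _).mul continuous_const).mul (continuous_holonomy _)) (letterSign e w[k])

lemma trace_holonomyVar_holonomy (e : E) (v w : Word E) (U : GaugeField E N) :
    (holonomyVar e v U (holonomy U w)).trace =
      ∑ k : Fin v.length, letterSign e v[k] * loopTrace U (splice v k w) := by
  simp [holonomyVar_apply, Matrix.trace_sum, loopTrace, splice, holonomy_append, mul_assoc]

lemma sum_holonomyVar_single (e : E) (w : Word E) (U : GaugeField E N) :
    ∑ i, ∑ j, holonomyVar e w U (Matrix.single i j 1) i j = ∑ k : Fin w.length,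
      letterSign e w[k] * (loopTrace U (cutLeft w k) * loopTrace U (cutRight w k)) := by
  have hentry (A B : Matrix (Fin N) (Fin N) ℂ) (i j : Fin N) :
      (A * (Matrix.single i j 1 : Matrix (Fin N) (Fin N) ℂ) * B) i j = A i i * B j j := by
    simp [Matrix.mul_apply, Matrix.single_apply, ite_and]
  simp only [holonomyVar_apply, Matrix.sum_apply, Matrix.smul_apply, hentry, smul_eq_mul]
  simp_rw [Finset.sum_comm (s := (Finset.univ : Finset (Fin N)))
    (t := (Finset.univ : Finset (Fin w.length)))]
  simp only [loopTrace, Matrix.trace, Matrix.diag_apply, Finset.sum_mul_sum]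
  simp only [Finset.mul_sum]

open scoped Matrix.Norms.L2Operator

/-- Left translation of the gauge field on the edge `e` by `exp (i t H)`. -/
def edgeFlow (e : E) (H : selfAdjoint (Matrix (Fin N) (Fin N) ℂ)) (t : ℝ) (U : GaugeField E N) :
    GaugeField E N :=
  Pi.mulSingle e (selfAdjoint.expUnitary (t • H)) * U

lemma edgeFlow_zero (e : E) (H : selfAdjoint (Matrix (Fin N) (Fin N) ℂ)) (U : GaugeField E N) :
    edgeFlow e H 0 U = U := by
  rw [edgeFlow, zero_smul, selfAdjoint.expUnitary_zero, Pi.mulSingle_one, one_mul]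

lemma edgeFlow_apply_self (e : E) (H : selfAdjoint (Matrix (Fin N) (Fin N) ℂ)) (t : ℝ)
    (U : GaugeField E N) : edgeFlow e H t U e = selfAdjoint.expUnitary (t • H) * U e := by
  simp [edgeFlow]

lemma hasDerivAt_expUnitary_smul (H : selfAdjoint (Matrix (Fin N) (Fin N) ℂ)) (t : ℝ) :
    HasDerivAt
      (fun s : ℝ => (selfAdjoint.expUnitary (s • H) : Matrix (Fin N) (Fin N) ℂ))
      (Complex.I • (H : Matrix (Fin N) (Fin N) ℂ) * selfAdjoint.expUnitary (t • H)) t := by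
  simpa [smul_comm Complex.I] using
    hasDerivAt_exp_smul_const' (𝕂 := ℝ) (Complex.I • (H : Matrix (Fin N) (Fin N) ℂ)) t

lemma hasDerivAt_conjTranspose_expUnitary_smul (H : selfAdjoint (Matrix (Fin N) (Fin N) ℂ))
    (t : ℝ) :
    HasDerivAt
      (fun s : ℝ => (selfAdjoint.expUnitary (s • H) : Matrix (Fin N) (Fin N) ℂ)ᴴ)
      (-((selfAdjoint.expUnitary (t • H) : Matrix (Fin N) (Fin N) ℂ)ᴴ *
        Complex.I • (H : Matrix (Fin N) (Fin N) ℂ))) t := by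
  have hH : (H : Matrix (Fin N) (Fin N) ℂ)ᴴ = H := H.2
  have hexp (s : ℝ) : (selfAdjoint.expUnitary (s • H) : Matrix (Fin N) (Fin N) ℂ)ᴴ =
      NormedSpace.exp (s • -(Complex.I • (H : Matrix (Fin N) (Fin N) ℂ))) := by
    simp [← Matrix.exp_conjTranspose, Matrix.conjTranspose_smul, hH, smul_comm Complex.I]
  simp_rw [hexp, ← mul_neg]
  exact hasDerivAt_exp_smul_const _ t

lemma hasDerivAt_holonomy_singleton (e : E) (H : selfAdjoint (Matrix (Fin N) (Fin N) ℂ))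
    (a : E × Bool) (U : GaugeField E N) (t : ℝ) :
    HasDerivAt (fun s => holonomy (edgeFlow e H s U) [a])
      (holonomyVar e [a] (edgeFlow e H t U) (Complex.I • (H : Matrix (Fin N) (Fin N) ℂ))) t := by
  obtain ⟨e', b⟩ := a
  obtain rfl | he := eq_or_ne e' e
  · cases b
    · simp only [holonomyVar_singleton_false, holonomy_singleton_false, edgeFlow_apply_self,
        Submonoid.coe_mul, Matrix.conjTranspose_mul, mul_assoc, ← mul_neg]
      simpa only [mul_neg] using (hasDerivAt_conjTranspose_expUnitary_smul H t).const_mul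
        (U e' : Matrix (Fin N) (Fin N) ℂ)ᴴ
    · simp only [holonomyVar_singleton_true, holonomy_singleton_true, edgeFlow_apply_self,
        Submonoid.coe_mul, ← mul_assoc]
      exact (hasDerivAt_expUnitary_smul H t).mul_const (U e' : Matrix (Fin N) (Fin N) ℂ)
  · have hconst (s : ℝ) : holonomy (edgeFlow e H s U) [(e', b)] = holonomy U [(e', b)] := by
      cases b <;> simp [edgeFlow, he]
    simp_rw [hconst, holonomyVar_singleton_of_ne (a := (e', b)) he]
    exact hasDerivAt_const t _

lemma hasDerivAt_holonomy (e : E) (H : selfAdjoint (Matrix (Fin N) (Fin N) ℂ)) (w : Word E)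
    (U : GaugeField E N) (t : ℝ) :
    HasDerivAt (fun s => holonomy (edgeFlow e H s U) w)
      (holonomyVar e w (edgeFlow e H t U) (Complex.I • (H : Matrix (Fin N) (Fin N) ℂ))) t := by
  induction w with
  | nil =>
    simp only [holonomy_nil, holonomyVar_apply, List.length_nil, Finset.univ_eq_empty,
      Finset.sum_empty]
    exact hasDerivAt_const t (1 : Matrix (Fin N) (Fin N) ℂ)
  | cons a w ih =>
    rw [holonomyVar_cons]
    simp_rw [holonomy_cons _ a w]
    exact (hasDerivAt_holonomy_singleton e H a U t).mul ih

/-- `g' U` is the linear response of the observable `g` to the variation `δU e = X * U e`. The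
derivative exists only in the directions `X = i H` tangent to `U(N)`; `g' U` is its complex-linear
extension to all matrices. -/
structure HasEdgeVar (e : E) (g : GaugeField E N → ℂ)
    (g' : GaugeField E N → Matrix (Fin N) (Fin N) ℂ →ₗ[ℂ] ℂ) : Prop where
  continuous : Continuous g
  continuous_var : ∀ X, Continuous fun U => g' U X
  hasDerivAt : ∀ (H : selfAdjoint (Matrix (Fin N) (Fin N) ℂ)) U t,
    HasDerivAt (fun s => g (edgeFlow e H s U))
      (g' (edgeFlow e H t U) (Complex.I • (H : Matrix (Fin N) (Fin N) ℂ))) t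

lemma hasEdgeVar_linear_holonomy (ℓ : Matrix (Fin N) (Fin N) ℂ →ₗ[ℂ] ℂ) (e : E) (w : Word E) :
    HasEdgeVar e (fun U => ℓ (holonomy U w)) (fun U => ℓ ∘ₗ holonomyVar e w U) where
  continuous := ℓ.continuous_of_finiteDimensional.comp (continuous_holonomy w)
  continuous_var X := ℓ.continuous_of_finiteDimensional.comp (continuous_holonomyVar e w X)
  hasDerivAt H U t := (LinearMap.toContinuousLinearMap
    (ℓ.restrictScalars ℝ)).hasFDerivAt.comp_hasDerivAt t (hasDerivAt_holonomy e H w U t)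

variable {e : E}

lemma HasEdgeVar.mul {g h : GaugeField E N → ℂ}
    {g' h' : GaugeField E N → Matrix (Fin N) (Fin N) ℂ →ₗ[ℂ] ℂ} (hg : HasEdgeVar e g g')
    (hh : HasEdgeVar e h h') :
    HasEdgeVar e (fun U => g U * h U) (fun U => h U • g' U + g U • h' U) where
  continuous := hg.continuous.mul hh.continuous
  continuous_var X :=
    (hh.continuous.mul (hg.continuous_var X)).add (hg.continuous.mul (hh.continuous_var X))
  hasDerivAt H U t := by
    simpa only [LinearMap.add_apply, LinearMap.smul_apply, smul_eq_mul, mul_comm (h _)] using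
      (hg.hasDerivAt H U t).fun_mul (hh.hasDerivAt H U t)

lemma HasEdgeVar.finsetProd {ι : Type*} [DecidableEq ι] {s : Finset ι}
    {g : ι → GaugeField E N → ℂ} {g' : ι → GaugeField E N → Matrix (Fin N) (Fin N) ℂ →ₗ[ℂ] ℂ}
    (hg : ∀ j ∈ s, HasEdgeVar e (g j) (g' j)) :
    HasEdgeVar e (fun U => ∏ j ∈ s, g j U)
      (fun U => ∑ j ∈ s, (∏ i ∈ s.erase j, g i U) • g' j U) where
  continuous := continuous_finsetProd _ fun j hj => (hg j hj).continuous
  continuous_var X := by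
    simp only [LinearMap.sum_apply, LinearMap.smul_apply, smul_eq_mul]
    exact continuous_finsetSum _ fun j hj => (continuous_finsetProd _ fun i hi =>
      (hg i (Finset.mem_of_mem_erase hi)).continuous).mul ((hg j hj).continuous_var X)
  hasDerivAt H U t := by
    simpa only [LinearMap.sum_apply, LinearMap.smul_apply] using
      HasDerivAt.fun_finsetProd fun j hj => (hg j hj).hasDerivAt H U t

lemma hasEdgeVar_loopProd {ι : Type*} [DecidableEq ι] (e : E) (s : Finset ι) (p : ι → Word E) :
    HasEdgeVar e (fun U : GaugeField E N => loopProd U (s.val.map p))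
      (fun U => ∑ j ∈ s, loopProd U ((s.erase j).val.map p) •
        (Matrix.traceLinearMap (Fin N) ℂ ℂ ∘ₗ holonomyVar e (p j) U)) := by
  simp_rw [loopProd_map_val]
  exact HasEdgeVar.finsetProd fun j _ =>
    hasEdgeVar_linear_holonomy (Matrix.traceLinearMap (Fin N) ℂ ℂ) e (p j)

lemma HasEdgeVar.integral_selfAdjoint_eq_zero [Countable E] {μ : Measure (GaugeField E N)}
    [IsFiniteMeasure μ] [μ.IsMulLeftInvariant] {g : GaugeField E N → ℂ}
    {g' : GaugeField E N → Matrix (Fin N) (Fin N) ℂ →ₗ[ℂ] ℂ} (hg : HasEdgeVar e g g')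
    (H : selfAdjoint (Matrix (Fin N) (Fin N) ℂ)) :
    ∫ U, g' U (Complex.I • (H : Matrix (Fin N) (Fin N) ℂ)) ∂μ = 0 := by
  set X : Matrix (Fin N) (Fin N) ℂ := Complex.I • (H : Matrix (Fin N) (Fin N) ℂ)
  obtain ⟨C, hC⟩ := (isCompact_range (hg.continuous_var X)).isBounded.exists_norm_le
  have hflow (t : ℝ) : Continuous (edgeFlow (N := N) e H t) := continuous_const.mul continuous_id
  have hderiv : HasDerivAt (fun t => ∫ U, g (edgeFlow e H t U) ∂μ)
      (∫ U, g' (edgeFlow e H 0 U) X ∂μ) 0 :=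
    (hasDerivAt_integral_of_dominated_loc_of_deriv_le (bound := fun _ => C) Filter.univ_mem
      (Eventually.of_forall fun t => (integrable_of_continuous_gaugeField
        (hg.continuous.comp (hflow t))).aestronglyMeasurable)
      (integrable_of_continuous_gaugeField (hg.continuous.comp (hflow 0)))
      (integrable_of_continuous_gaugeField
        ((hg.continuous_var X).comp (hflow 0))).aestronglyMeasurable
      (Eventually.of_forall fun U t _ => hC _ ⟨_, rfl⟩) (integrable_const C)
      (Eventually.of_forall fun U t _ => hg.hasDerivAt H U t)).2
  have hinv (t : ℝ) : ∫ U, g (edgeFlow e H t U) ∂μ = ∫ U, g U ∂μ :=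
    integral_mul_left_eq_self g _
  simp only [hinv, edgeFlow_zero] at hderiv
  exact hderiv.unique (hasDerivAt_const 0 _)

lemma HasEdgeVar.integral_eq_zero [Countable E] {μ : Measure (GaugeField E N)}
    [IsFiniteMeasure μ] [μ.IsMulLeftInvariant] {g : GaugeField E N → ℂ}
    {g' : GaugeField E N → Matrix (Fin N) (Fin N) ℂ →ₗ[ℂ] ℂ} (hg : HasEdgeVar e g g')
    (X : Matrix (Fin N) (Fin N) ℂ) : ∫ U, g' U X ∂μ = 0 := by
  have hX : X = -Complex.I • (Complex.I • (realPart X : Matrix (Fin N) (Fin N) ℂ)) +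
      Complex.I • (imaginaryPart X : Matrix (Fin N) (Fin N) ℂ) := by
    rw [smul_smul, neg_mul, Complex.I_mul_I, neg_neg, one_smul, realPart_add_I_smul_imaginaryPart]
  have hint (Y : Matrix (Fin N) (Fin N) ℂ) : Integrable (fun U => g' U Y) μ :=
    integrable_of_continuous_gaugeField (hg.continuous_var Y)
  rw [hX]
  simp_rw [map_add, map_smul _ (-Complex.I), smul_eq_mul]
  rw [integral_add ((hint _).const_mul _) (hint _), integral_const_mul,
    hg.integral_selfAdjoint_eq_zero, hg.integral_selfAdjoint_eq_zero, mul_zero, add_zero]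

end Variation

section LoopEquation

variable {E : Type*} {N : ℕ} {μ : Measure (GaugeField E N)}

/-- The expectation `⟨∏ Tr U(w)⟩` of the product of the Wilson loops of a multiset of words. -/
def loopExpectation (μ : Measure (GaugeField E N)) (S : Multiset (Word E)) : ℂ :=
  ∫ U, loopProd U S ∂μ

lemma norm_loopExpectation_le [IsProbabilityMeasure μ] (S : Multiset (Word E)) :
    ‖loopExpectation μ S‖ ≤ (N : ℝ) ^ S.card := by
  simpa [loopExpectation] using norm_integral_le_of_norm_le_const (μ := μ)
    (Eventually.of_forall fun U => norm_loopProd_le U S)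

lemma loopExpectation_zero [IsProbabilityMeasure μ] : loopExpectation μ 0 = 1 := by
  simp [loopExpectation]

lemma loopExpectation_cons_of_mk_eq_one {w : Word E} (hw : FreeGroup.mk w = 1)
    (S : Multiset (Word E)) : loopExpectation μ (w ::ₘ S) = N * loopExpectation μ S := by
  simp only [loopExpectation, loopProd_cons, loopTrace_of_mk_eq_one _ hw, integral_const_mul]

lemma loopExpectation_cons_eq_of_isConj {v w : Word E}
    (h : IsConj (FreeGroup.mk v) (FreeGroup.mk w)) (S : Multiset (Word E)) :
    loopExpectation μ (v ::ₘ S) = loopExpectation μ (w ::ₘ S) := by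
  simp only [loopExpectation, loopProd_cons, loopTrace_eq_of_isConj _ h]

variable [Countable E] [IsFiniteMeasure μ] [μ.IsMulLeftInvariant]

lemma HasEdgeVar.schwingerDyson [DecidableEq E] {e : E} {h : GaugeField E N → ℂ}
    {h' : GaugeField E N → Matrix (Fin N) (Fin N) ℂ →ₗ[ℂ] ℂ} (hh : HasEdgeVar e h h')
    (w : Word E) :
    ∫ U, (h U * ∑ k : Fin w.length,
      letterSign e w[k] * (loopTrace U (cutLeft w k) * loopTrace U (cutRight w k)) +
        h' U (holonomy U w)) ∂μ = 0 := by
  -- Vary the entry `U(w) i j`, times `h`, in the direction `single i j 1` and sum over `i, j`.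
  let F (i j : Fin N) (U : GaugeField E N) : ℂ :=
    h U * holonomyVar e w U (Matrix.single i j 1) i j +
      holonomy U w i j * h' U (Matrix.single i j 1)
  have hvar (i j : Fin N) :=
    (hasEdgeVar_linear_holonomy (Matrix.entryLinearMap ℂ ℂ i j) e w).mul hh
  have hzero (i j : Fin N) : ∫ U, F i j U ∂μ = 0 := (hvar i j).integral_eq_zero _
  have hint (i j : Fin N) : Integrable (F i j) μ :=
    integrable_of_continuous_gaugeField ((hvar i j).continuous_var (Matrix.single i j 1))
  have hsplit (U : GaugeField E N) :
      h' U (holonomy U w) = ∑ i, ∑ j, holonomy U w i j * h' U (Matrix.single i j 1) := by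
    conv_lhs => rw [Matrix.matrix_eq_sum_single (holonomy U w)]
    simp only [_root_.map_sum, ← smul_eq_mul (holonomy U w _ _), ← map_smul, Matrix.smul_single]
    simp only [smul_eq_mul, mul_one]
  simp_rw [hsplit, ← sum_holonomyVar_single, Finset.mul_sum, ← Finset.sum_add_distrib]
  change ∫ U, ∑ i, ∑ j, F i j U ∂μ = 0
  rw [integral_finsetSum _ fun i _ => integrable_finsetSum _ fun j _ => hint i j]
  simp [integral_finsetSum _ fun j _ => hint _ j, hzero]

lemma loop_equation [DecidableEq E] {ι : Type*} [DecidableEq ι] (e : E) (w : Word E)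
    (s : Finset ι) (p : ι → Word E) :
    ∑ k : Fin w.length, letterSign e w[k] *
        loopExpectation μ (cutLeft w k ::ₘ cutRight w k ::ₘ s.val.map p) +
      ∑ j ∈ s, ∑ k : Fin (p j).length, letterSign e (p j)[k] *
        loopExpectation μ (splice (p j) k w ::ₘ (s.erase j).val.map p) = 0 := by
  have hint (c : ℂ) (S : Multiset (Word E)) : Integrable (fun U => c * loopProd U S) μ :=
    (integrable_of_continuous_gaugeField (continuous_loopProd S)).const_mul c
  rw [← (hasEdgeVar_loopProd e s p).schwingerDyson (μ := μ) w]
  simp only [loopExpectation, ← integral_const_mul]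
  rw [← integral_finsetSum _ fun k _ => hint _ _, ← Finset.sum_congr rfl fun j _ =>
      integral_finsetSum _ fun k _ => hint _ _, ← integral_finsetSum _ fun j _ =>
      integrable_finsetSum _ fun k _ => hint _ _, ← integral_add
      (integrable_finsetSum _ fun k _ => hint _ _)
      (integrable_finsetSum _ fun j _ => integrable_finsetSum _ fun k _ => hint _ _)]
  refine integral_congr_ae (Eventually.of_forall fun U => ?_)
  simp only [LinearMap.sum_apply, LinearMap.smul_apply, LinearMap.comp_apply, loopProd_cons,
    Matrix.traceLinearMap_apply, trace_holonomyVar_holonomy, smul_eq_mul, Finset.mul_sum]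
  congr 1
  · exact Finset.sum_congr rfl fun k _ => by ring
  · exact Finset.sum_congr rfl fun j _ => Finset.sum_congr rfl fun k _ => by ring

lemma loop_equation_of_isPivot [DecidableEq E] {ι : Type*} [DecidableEq ι] {w : Word E}
    {k₀ : Fin w.length} (hk₀ : IsPivot w k₀) (s : Finset ι) (p : ι → Word E) :
    letterSign w[k₀].1 w[k₀] * (N * loopExpectation μ (w ::ₘ s.val.map p)) =
      -∑ k ∈ Finset.univ.erase k₀, letterSign w[k₀].1 w[k] *
          loopExpectation μ (cutLeft w k ::ₘ cutRight w k ::ₘ s.val.map p) -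
        ∑ j ∈ s, ∑ k : Fin (p j).length, letterSign w[k₀].1 (p j)[k] *
          loopExpectation μ (splice (p j) k w ::ₘ (s.erase j).val.map p) := by
  have hcut : loopExpectation μ (cutLeft w k₀ ::ₘ cutRight w k₀ ::ₘ s.val.map p) =
      N * loopExpectation μ (w ::ₘ s.val.map p) := by
    have happ := cutLeft_append_cutRight w k₀
    obtain h | h := hk₀.cut_eq_nil
    · rw [h, List.nil_append] at happ
      rw [h, happ, loopExpectation_cons_of_mk_eq_one FreeGroup.one_eq_mk.symm]
    · rw [h, List.append_nil] at happ
      rw [h, happ, Multiset.cons_swap, loopExpectation_cons_of_mk_eq_one FreeGroup.one_eq_mk.symm]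
  rw [eq_sub_iff_add_eq, eq_neg_iff_add_eq_zero, ← loop_equation (μ := μ) w[k₀].1 w s p,
    ← Finset.add_sum_erase _ _ (Finset.mem_univ k₀), hcut]
  ring

end LoopEquation

section UniformBound

variable {E : Type*}

/-- The multisets of nontrivial words of total length at most `n`. -/
def shortLoops (E : Type*) (n : ℕ) : Set (Multiset (Word E)) :=
  {S | (∀ w ∈ S, FreeGroup.mk w ≠ 1) ∧ (S.map List.length).sum ≤ n}

lemma zero_mem_shortLoops (n : ℕ) : 0 ∈ shortLoops E n := by
  simp [shortLoops]

lemma cons_mem_shortLoops_iff {n : ℕ} {w : Word E} {S : Multiset (Word E)} :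
    w ::ₘ S ∈ shortLoops E n ↔
      FreeGroup.mk w ≠ 1 ∧ (∀ v ∈ S, FreeGroup.mk v ≠ 1) ∧
        w.length + (S.map List.length).sum ≤ n := by
  simp only [shortLoops, Set.mem_ofPred_eq, Multiset.forall_mem_cons, Multiset.map_cons,
    Multiset.sum_cons, and_assoc]

lemma length_pos_of_mk_ne_one {w : Word E} (h : FreeGroup.mk w ≠ 1) : 0 < w.length :=
  List.length_pos_of_ne_nil fun hw => h (hw ▸ FreeGroup.one_eq_mk.symm)

lemma card_le_of_mem_shortLoops {n : ℕ} {S : Multiset (Word E)} (h : S ∈ shortLoops E n) :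
    S.card ≤ n := by
  refine le_trans ?_ h.2
  have hone : ∀ l ∈ S.map List.length, 1 ≤ l := fun l hl => by
    obtain ⟨w, hw, rfl⟩ := Multiset.mem_map.1 hl
    exact length_pos_of_mk_ne_one (h.1 w hw)
  simpa using Multiset.card_nsmul_le_sum hone

lemma cut_mem_shortLoops {n : ℕ} {w : Word E} {S : Multiset (Word E)}
    (h : w ::ₘ S ∈ shortLoops E n) {k : Fin w.length}
    (hk : FreeGroup.mk (cutLeft w k) ≠ 1 ∧ FreeGroup.mk (cutRight w k) ≠ 1) :
    cutLeft w k ::ₘ cutRight w k ::ₘ S ∈ shortLoops E n := by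
  obtain ⟨-, hS, hlen⟩ := cons_mem_shortLoops_iff.1 h
  have := length_cutLeft_add_length_cutRight w k
  refine cons_mem_shortLoops_iff.2 ⟨hk.1, Multiset.forall_mem_cons.2 ⟨hk.2, hS⟩, ?_⟩
  simp only [Multiset.map_cons, Multiset.sum_cons]
  omega

lemma splice_mem_shortLoops {n : ℕ} {v w : Word E} {S : Multiset (Word E)}
    (h : w ::ₘ v ::ₘ S ∈ shortLoops E n) {k : Fin v.length}
    (hk : FreeGroup.mk (splice v k w) ≠ 1) : splice v k w ::ₘ S ∈ shortLoops E n := by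
  obtain ⟨-, hS, hlen⟩ := cons_mem_shortLoops_iff.1 h
  refine cons_mem_shortLoops_iff.2 ⟨hk, (Multiset.forall_mem_cons.1 hS).2, ?_⟩
  simp only [Multiset.map_cons, Multiset.sum_cons] at hlen
  rw [length_splice]
  omega

section FixedRank

variable {N : ℕ} {μ : Measure (GaugeField E N)} {n : ℕ} {C M : ℝ}

lemma norm_loopExpectation_splice_le
    (hC : ∀ S ∈ shortLoops E n, ‖loopExpectation μ S‖ ≤ C)
    (hM : ∀ S ∈ shortLoops E (n + 1), ‖loopExpectation μ S‖ ≤ M)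
    {v w : Word E} {S : Multiset (Word E)} (h : w ::ₘ v ::ₘ S ∈ shortLoops E (n + 1))
    (k : Fin v.length) : ‖loopExpectation μ (splice v k w ::ₘ S)‖ ≤ M + N * C := by
  have hC0 : 0 ≤ C := (norm_nonneg _).trans (hC 0 (zero_mem_shortLoops n))
  have hM0 : 0 ≤ M := (norm_nonneg _).trans (hM 0 (zero_mem_shortLoops (n + 1)))
  by_cases h1 : FreeGroup.mk (splice v k w) = 1
  · have hS : S ∈ shortLoops E n := by
      obtain ⟨-, hvS, hlen⟩ := cons_mem_shortLoops_iff.1 h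
      simp only [Multiset.forall_mem_cons, Multiset.map_cons, Multiset.sum_cons] at hvS hlen
      exact ⟨hvS.2, by have := k.pos; omega⟩
    rw [loopExpectation_cons_of_mk_eq_one h1, norm_mul, Complex.norm_natCast]
    exact le_add_of_nonneg_of_le hM0 (by gcongr; exact hC S hS)
  · exact (hM _ (splice_mem_shortLoops h h1)).trans (le_add_of_nonneg_right (by positivity))

lemma norm_sum_cut_le [DecidableEq E]
    (hM : ∀ S ∈ shortLoops E n, ‖loopExpectation μ S‖ ≤ M) {w : Word E}
    {k₀ : Fin w.length} (hk₀ : IsPivot w k₀) {S : Multiset (Word E)}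
    (h : w ::ₘ S ∈ shortLoops E n) :
    ‖∑ k ∈ Finset.univ.erase k₀, letterSign w[k₀].1 w[k] *
      loopExpectation μ (cutLeft w k ::ₘ cutRight w k ::ₘ S)‖ ≤ w.length * M := by
  have hM0 : 0 ≤ M := (norm_nonneg _).trans (hM 0 (zero_mem_shortLoops n))
  refine (norm_sum_le_of_le _ fun k hk => norm_letterSign_mul_le hM0 fun he =>
    hM _ (cut_mem_shortLoops h (hk₀.mk_cut_ne_one k (Finset.ne_of_mem_erase hk) he))).trans ?_
  rw [Finset.sum_const, nsmul_eq_mul]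
  gcongr
  exact Finset.card_erase_le.trans (by simp)

lemma norm_sum_splice_le [DecidableEq E] {ι : Type*} [DecidableEq ι]
    (hC : ∀ S ∈ shortLoops E n, ‖loopExpectation μ S‖ ≤ C)
    (hM : ∀ S ∈ shortLoops E (n + 1), ‖loopExpectation μ S‖ ≤ M) (e : E) {w : Word E}
    {s : Finset ι} {p : ι → Word E} (h : w ::ₘ s.val.map p ∈ shortLoops E (n + 1)) :
    ‖∑ j ∈ s, ∑ k : Fin (p j).length, letterSign e (p j)[k] *
      loopExpectation μ (splice (p j) k w ::ₘ (s.erase j).val.map p)‖ ≤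
      (∑ j ∈ s, ((p j).length : ℝ)) * (M + N * C) := by
  rw [Finset.sum_mul]
  refine norm_sum_le_of_le _ fun j hj => ?_
  have hmem : w ::ₘ p j ::ₘ (s.erase j).val.map p ∈ shortLoops E (n + 1) := by
    rwa [Finset.erase_val, ← Multiset.map_cons, Multiset.cons_erase hj]
  have hle (k : Fin (p j).length) := norm_loopExpectation_splice_le hC hM hmem k
  refine (norm_sum_le_of_le _ fun k _ => norm_letterSign_mul_le ((norm_nonneg _).trans (hle k))
    fun _ => hle k).trans_eq ?_
  rw [Finset.sum_const, nsmul_eq_mul, Finset.card_univ, Fintype.card_fin]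

variable [Countable E] [IsFiniteMeasure μ] [μ.IsMulLeftInvariant]

lemma norm_loopExpectation_le_of_isPivot
    (hC : ∀ S ∈ shortLoops E n, ‖loopExpectation μ S‖ ≤ C)
    (hM : ∀ S ∈ shortLoops E (n + 1), ‖loopExpectation μ S‖ ≤ M) {w : Word E}
    {k₀ : Fin w.length} (hk₀ : IsPivot w k₀) {ι : Type*} {s : Finset ι} {p : ι → Word E}
    (h : w ::ₘ s.val.map p ∈ shortLoops E (n + 1)) :
    N * ‖loopExpectation μ (w ::ₘ s.val.map p)‖ ≤ (n + 1) * (M + N * C) := by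
  classical
  have hC0 : 0 ≤ C := (norm_nonneg _).trans (hC 0 (zero_mem_shortLoops n))
  have hM0 : 0 ≤ M := (norm_nonneg _).trans (hM 0 (zero_mem_shortLoops (n + 1)))
  have hlen : (w.length : ℝ) + ∑ j ∈ s, ((p j).length : ℝ) ≤ n + 1 := by
    have := (cons_mem_shortLoops_iff.1 h).2.2
    rw [Multiset.map_map] at this
    exact_mod_cast this
  calc N * ‖loopExpectation μ (w ::ₘ s.val.map p)‖
      = ‖letterSign w[k₀].1 w[k₀] * (N * loopExpectation μ (w ::ₘ s.val.map p))‖ := by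
        rw [norm_mul, norm_mul, norm_letterSign_self, one_mul, Complex.norm_natCast]
    _ ≤ w.length * M + (∑ j ∈ s, ((p j).length : ℝ)) * (M + N * C) := by
        rw [loop_equation_of_isPivot hk₀]
        exact (norm_sub_le _ _).trans (add_le_add ((norm_neg _).trans_le (norm_sum_cut_le hM hk₀ h))
          (norm_sum_splice_le hC hM _ h))
    _ ≤ w.length * (M + N * C) + (∑ j ∈ s, ((p j).length : ℝ)) * (M + N * C) := by
        gcongr
        exact le_add_of_nonneg_right (by positivity)
    _ ≤ (n + 1) * (M + N * C) := by
        rw [← add_mul]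
        gcongr

lemma norm_loopExpectation_le_of_mem_shortLoops
    (hC : ∀ S ∈ shortLoops E n, ‖loopExpectation μ S‖ ≤ C)
    (hM : ∀ S ∈ shortLoops E (n + 1), ‖loopExpectation μ S‖ ≤ M)
    {S : Multiset (Word E)} (hS : S ∈ shortLoops E (n + 1)) :
    N * ‖loopExpectation μ S‖ ≤ (n + 1) * (M + N * C) := by
  classical
  obtain rfl | ⟨w, hwS⟩ := Multiset.empty_or_exists_mem S
  · have hM0 : 0 ≤ M := (norm_nonneg _).trans (hM 0 (zero_mem_shortLoops (n + 1)))
    calc N * ‖loopExpectation μ 0‖ ≤ M + N * C :=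
          le_add_of_nonneg_of_le hM0 (by gcongr; exact hC 0 (zero_mem_shortLoops n))
      _ ≤ (n + 1) * (M + N * C) := by
          have hC0 : 0 ≤ C := (norm_nonneg _).trans (hC 0 (zero_mem_shortLoops n))
          exact le_mul_of_one_le_left (by positivity) (by simp)
  · obtain ⟨T, rfl⟩ := Multiset.exists_cons_of_mem hwS
    obtain ⟨hw, hT, hlen⟩ := cons_mem_shortLoops_iff.1 hS
    obtain ⟨v, k₀, hk₀, hvw, hconj⟩ := exists_isPivot hw
    have hv : FreeGroup.mk v ≠ 1 := fun hv => hw (isConj_one_right.1 (hv ▸ hconj))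
    have hmem : v ::ₘ (Finset.univ : Finset T.ToType).val.map (fun x => x.1) ∈
        shortLoops E (n + 1) := by
      rw [Multiset.map_univ_coe]
      exact cons_mem_shortLoops_iff.2 ⟨hv, hT, by omega⟩
    simpa only [Multiset.map_univ_coe, loopExpectation_cons_eq_of_isConj hconj] using
      norm_loopExpectation_le_of_isPivot hC hM hk₀ hmem

end FixedRank

lemma le_two_mul_of_forall_bound_half {α : Type*} {s : Set α} {f : α → ℝ} {B : ℝ}
    (hs : s.Nonempty) (hf : BddAbove (f '' s))
    (h : ∀ M, (∀ a ∈ s, f a ≤ M) → ∀ a ∈ s, f a ≤ M / 2 + B) : ∀ a ∈ s, f a ≤ 2 * B := by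
  have hle (a) (ha : a ∈ s) : f a ≤ sSup (f '' s) := le_csSup hf ⟨a, ha, rfl⟩
  have hsup : sSup (f '' s) ≤ sSup (f '' s) / 2 + B :=
    csSup_le (hs.image f) (Set.forall_mem_image.2 (h _ hle))
  exact fun a ha => (hle a ha).trans (by linarith)

variable [Countable E] {μ : ∀ N : ℕ, Measure (GaugeField E N)}
  [∀ N, IsProbabilityMeasure (μ N)] [∀ N, (μ N).IsMulLeftInvariant]

lemma exists_norm_loopExpectation_le (n : ℕ) :
    ∃ C : ℝ, ∃ N₀ : ℕ, ∀ N ≥ N₀, ∀ S ∈ shortLoops E n, ‖loopExpectation (μ N) S‖ ≤ C := by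
  induction n with
  | zero =>
    refine ⟨1, 0, fun N _ S hS => ?_⟩
    rw [Multiset.card_eq_zero.1 (Nat.le_zero.1 (card_le_of_mem_shortLoops hS)),
      loopExpectation_zero, norm_one]
  | succ n ih =>
    obtain ⟨C, N₀, hC⟩ := ih
    refine ⟨2 * ((n + 1) * C), max N₀ (2 * (n + 1)), fun N hN => ?_⟩
    have hNn : (2 * (n + 1) : ℝ) ≤ N := by exact_mod_cast (le_max_right _ _).trans hN
    have hN1 : (1 : ℝ) ≤ N := by linarith [Nat.cast_nonneg' (α := ℝ) n]
    refine le_two_mul_of_forall_bound_half ⟨0, zero_mem_shortLoops _⟩ ⟨(N : ℝ) ^ (n + 1), ?_⟩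
      fun M hM S hS => ?_
    -- The crude bound `N ^ (n + 1)` only serves to make the supremum over the loops finite.
    · refine Set.forall_mem_image.2 fun S hS => (norm_loopExpectation_le S).trans ?_
      exact pow_le_pow_right₀ hN1 (card_le_of_mem_shortLoops hS)
    · have hM0 : 0 ≤ M := (norm_nonneg _).trans (hM 0 (zero_mem_shortLoops (n + 1)))
      have := norm_loopExpectation_le_of_mem_shortLoops (hC N ((le_max_left _ _).trans hN)) hM hS
      refine le_of_mul_le_mul_left (this.trans ?_) (zero_lt_one.trans_le hN1)
      nlinarith

lemma isBigO_loopExpectation {S : Multiset (Word E)} (hS : ∀ w ∈ S, FreeGroup.mk w ≠ 1) :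
    (fun N => loopExpectation (μ N) S) =O[atTop] (fun _ => (1 : ℝ)) := by
  obtain ⟨C, N₀, hC⟩ := exists_norm_loopExpectation_le (μ := μ) (S.map List.length).sum
  refine Asymptotics.IsBigO.of_bound C ((eventually_ge_atTop N₀).mono fun N hN => ?_)
  simpa using hC N hN S ⟨hS, le_rfl⟩

end UniformBound

lemma isBigO_inv_of_isBigO_natCast_mul {f : ℕ → ℂ}
    (hf : (fun N : ℕ => (N : ℂ) * f N) =O[atTop] (fun _ => (1 : ℝ))) :
    f =O[atTop] (fun N : ℕ => (N : ℝ)⁻¹) := by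
  have hinv : (fun N : ℕ => (N : ℂ)⁻¹) =O[atTop] (fun N : ℕ => (N : ℝ)⁻¹) :=
    Asymptotics.IsBigO.of_bound 1 (Eventually.of_forall fun N => by simp)
  refine (hinv.mul hf).congr' ?_ (by simp)
  filter_upwards [eventually_ne_atTop 0] with N hN
  rw [← mul_assoc, inv_mul_cancel₀ (by exact_mod_cast hN), one_mul]

section LeadingOrder

variable {E : Type*}

/-- The signed number of letters of `v` at which splicing in `w` yields a trivial word; this is the
large-`N` covariance of the Wilson loops of `w` and `v`. The letter `k₀` of `w` is the one at which
the loop equation is applied. -/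
def contraction [DecidableEq E] (w : Word E) (k₀ : Fin w.length) (v : Word E) : ℂ :=
  -∑ k : Fin v.length, letterSign w[k₀].1 w[k₀] * letterSign w[k₀].1 v[k] *
    if FreeGroup.mk (splice v k w) = 1 then 1 else 0

lemma loop_equation_sub_contraction [DecidableEq E] [Countable E] {N : ℕ}
    {μ : Measure (GaugeField E N)} [IsFiniteMeasure μ] [μ.IsMulLeftInvariant] {ι : Type*}
    [DecidableEq ι] {w : Word E} {k₀ : Fin w.length} (hk₀ : IsPivot w k₀) (s : Finset ι)
    (p : ι → Word E) :
    N * (loopExpectation μ (w ::ₘ s.val.map p) -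
        ∑ j ∈ s, contraction w k₀ (p j) * loopExpectation μ ((s.erase j).val.map p)) =
      letterSign w[k₀].1 w[k₀] *
        (-∑ k ∈ Finset.univ.erase k₀, letterSign w[k₀].1 w[k] *
            loopExpectation μ (cutLeft w k ::ₘ cutRight w k ::ₘ s.val.map p) -
          ∑ j ∈ s, ∑ k : Fin (p j).length, letterSign w[k₀].1 (p j)[k] *
            (loopExpectation μ (splice (p j) k w ::ₘ (s.erase j).val.map p) -
              (if FreeGroup.mk (splice (p j) k w) = 1 then 1 else 0) *
                (N * loopExpectation μ ((s.erase j).val.map p)))) := by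
  have hcontr (j : ι) : N * (contraction w k₀ (p j) * loopExpectation μ ((s.erase j).val.map p)) =
      -(letterSign w[k₀].1 w[k₀] * ∑ k : Fin (p j).length, letterSign w[k₀].1 (p j)[k] *
        ((if FreeGroup.mk (splice (p j) k w) = 1 then 1 else 0) *
          (N * loopExpectation μ ((s.erase j).val.map p)))) := by
    simp only [contraction, neg_mul, mul_neg, Finset.sum_mul, Finset.mul_sum]
    exact congrArg _ (Finset.sum_congr rfl fun k _ => by ring)
  have hpivot := congrArg (letterSign w[k₀].1 w[k₀] * ·) (loop_equation_of_isPivot (μ := μ) hk₀ s p)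
  simp only [← mul_assoc (letterSign _ w[k₀]) (letterSign _ w[k₀]), letterSign_mul_self, one_mul]
    at hpivot
  rw [mul_sub, hpivot, Finset.mul_sum]
  simp only [hcontr, Finset.sum_neg_distrib, ← Finset.mul_sum, mul_sub, Finset.sum_sub_distrib]
  ring

variable [DecidableEq E] [Countable E] {μ : ∀ N : ℕ, Measure (GaugeField E N)}
  [∀ N, IsProbabilityMeasure (μ N)] [∀ N, (μ N).IsMulLeftInvariant]

lemma isBigO_loopExpectation_splice_sub (v : Word E) (k : Fin v.length) (w : Word E)
    {S : Multiset (Word E)} (hS : ∀ u ∈ S, FreeGroup.mk u ≠ 1) :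
    (fun N => loopExpectation (μ N) (splice v k w ::ₘ S) -
      (if FreeGroup.mk (splice v k w) = 1 then 1 else 0) * (N * loopExpectation (μ N) S))
      =O[atTop] (fun _ => (1 : ℝ)) := by
  by_cases h1 : FreeGroup.mk (splice v k w) = 1
  · simpa only [if_pos h1, loopExpectation_cons_of_mk_eq_one h1, one_mul, sub_self] using
      Asymptotics.isBigO_zero _ _
  · simpa only [if_neg h1, zero_mul, sub_zero] using
      isBigO_loopExpectation (Multiset.forall_mem_cons.2 ⟨h1, hS⟩)

lemma isBigO_loopExpectation_sub_contraction {ι : Type*} [DecidableEq ι] {w : Word E}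
    {k₀ : Fin w.length} (hk₀ : IsPivot w k₀) {s : Finset ι} {p : ι → Word E}
    (hp : ∀ j ∈ s, FreeGroup.mk (p j) ≠ 1) :
    (fun N => loopExpectation (μ N) (w ::ₘ s.val.map p) -
      ∑ j ∈ s, contraction w k₀ (p j) * loopExpectation (μ N) ((s.erase j).val.map p))
      =O[atTop] (fun N : ℕ => (N : ℝ)⁻¹) := by
  have hmem {t : Finset ι} (hts : t ⊆ s) : ∀ u ∈ t.val.map p, FreeGroup.mk u ≠ 1 :=
    Multiset.forall_mem_map_iff.2 fun j hj => hp j (hts hj)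
  refine isBigO_inv_of_isBigO_natCast_mul ?_
  simp only [loop_equation_sub_contraction hk₀]
  refine (Asymptotics.IsBigO.sub (.neg_left <| .fun_sum fun k hk => ?_)
    (.fun_sum fun j _ => .fun_sum fun k _ => ?_)).const_mul_left _
  · by_cases he : w[k].1 = w[k₀].1
    · obtain ⟨hl, hr⟩ := hk₀.mk_cut_ne_one k (Finset.ne_of_mem_erase hk) he
      exact (isBigO_loopExpectation (μ := μ) (Multiset.forall_mem_cons.2 ⟨hl,
        Multiset.forall_mem_cons.2 ⟨hr, hmem subset_rfl⟩⟩)).const_mul_left _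
    · simpa only [letterSign_of_ne he, zero_mul] using Asymptotics.isBigO_zero _ _
  · exact (isBigO_loopExpectation_splice_sub (μ := μ) _ k w
      (hmem (s.erase_subset j))).const_mul_left _

end LeadingOrder

section Moments

/-- The `l`-th moment of the centred Gaussian of variance `c`; for `l = 0` the truncated subtraction
gives `0‼ = 1`. -/
def gaussianMoment (c : ℝ) (l : ℕ) : ℝ := if Odd l then 0 else (l - 1)‼ * c ^ (l / 2)

lemma gaussianMoment_add_two (c : ℝ) (l : ℕ) :
    gaussianMoment c (l + 2) = c * (l + 1) * gaussianMoment c l := by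
  unfold gaussianMoment
  have hodd : Odd (l + 2) ↔ Odd l := by simp [Nat.odd_add]
  by_cases h : Odd l
  · simp [h, hodd]
  · rw [if_neg (hodd.not.2 h), if_neg h, Nat.add_div_right l two_pos, pow_succ]
    obtain _ | l := l
    · simp
    · simp only [Nat.add_sub_cancel, show l + 1 + 2 - 1 = l + 2 by omega, Nat.doubleFactorial]
      push_cast
      ring

lemma gaussianMoment_sq_mul (a c : ℝ) (l : ℕ) :
    gaussianMoment (a ^ 2 * c) l = a ^ l * gaussianMoment c l := by
  unfold gaussianMoment
  split_ifs with h
  · rw [mul_zero]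
  · rw [mul_pow, ← pow_mul, Nat.mul_div_cancel' (even_iff_two_dvd.1 (Nat.not_odd_iff_even.1 h))]
    ring

lemma isBigO_sub_gaussianMoment {a : ℕ → ℕ → ℂ} {c : ℝ} {g : ℕ → ℝ} (h0 : ∀ N, a 0 N = 1)
    (h1 : a 1 =O[atTop] g)
    (hrec : ∀ m : ℕ, (fun N => a (m + 2) N - c * (m + 1) * a m N) =O[atTop] g) (l : ℕ) :
    (fun N => a l N - gaussianMoment c l) =O[atTop] g := by
  induction l using Nat.twoStepInduction with
  | zero => simpa [gaussianMoment, h0] using Asymptotics.isBigO_zero g atTop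
  | one => simpa [gaussianMoment] using h1
  | more l ih _ =>
    refine ((hrec l).add (ih.const_mul_left (c * (l + 1)))).congr_left fun N => ?_
    rw [gaussianMoment_add_two]
    push_cast
    ring

lemma sum_sum_mul_map_erase {ι α : Type*} [Fintype ι] (p : ι → α) (a : ι → ℂ)
    (F : Multiset α → ℂ) (m : ℕ) :
    ∑ q : Fin (m + 1) → ι, ∑ j, a (q j) * F ((Finset.univ.erase j).val.map (p ∘ q)) =
      (m + 1) * (∑ i, a i) * ∑ q : Fin m → ι, F (Finset.univ.val.map (p ∘ q)) := by
  have herase (j : Fin (m + 1)) (i : ι) (q : Fin m → ι) :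
      (Finset.univ.erase j).val.map (p ∘ j.insertNth i q) = Finset.univ.val.map (p ∘ q) := by
    have huniv : Finset.univ.erase j = Finset.univ.map j.succAboveEmb := by
      ext k
      simp [Fin.exists_succAbove_eq_iff]
    rw [huniv, Finset.map_val, Multiset.map_map]
    exact Multiset.map_congr rfl fun k _ => by simp
  have hterm (j : Fin (m + 1)) :
      ∑ q : Fin (m + 1) → ι, a (q j) * F ((Finset.univ.erase j).val.map (p ∘ q)) =
        (∑ i, a i) * ∑ q : Fin m → ι, F (Finset.univ.val.map (p ∘ q)) := by
    rw [← (Fin.insertNthEquiv (fun _ => ι) j).sum_comp, Fintype.sum_prod_type,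
      Finset.sum_mul_sum]
    exact Finset.sum_congr rfl fun i _ => Finset.sum_congr rfl fun q _ =>
      congrArg₂ (fun i S => a i * F S) (Fin.insertNth_apply_same (α := fun _ => ι) j i q)
        (herase j i q)
  rw [Finset.sum_comm, Finset.sum_congr rfl fun j _ => hterm j]
  simp [mul_assoc]

variable {E : Type*} [Countable E] {ι : Type*} [Fintype ι] {p : ι → Word E}

lemma integral_sum_loopTrace_pow {N : ℕ} (μ : Measure (GaugeField E N)) [IsFiniteMeasure μ]
    (p : ι → Word E) (m : ℕ) :
    ∫ U, (∑ i, loopTrace U (p i)) ^ m ∂μ =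
      ∑ q : Fin m → ι, loopExpectation μ (Finset.univ.val.map (p ∘ q)) := by
  simp only [loopExpectation]
  rw [← integral_finsetSum _ fun q _ =>
    integrable_of_continuous_gaugeField (continuous_loopProd _)]
  simp only [Fintype.sum_pow, loopProd_map_val, Function.comp_apply]

lemma integral_sum_loopTrace_pow_succ {N : ℕ} (μ : Measure (GaugeField E N)) [IsFiniteMeasure μ]
    (p : ι → Word E) (m : ℕ) :
    ∫ U, (∑ i, loopTrace U (p i)) ^ (m + 1) ∂μ =
      ∑ i, ∑ q : Fin m → ι, loopExpectation μ (p i ::ₘ Finset.univ.val.map (p ∘ q)) := by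
  simp only [loopExpectation]
  rw [← Finset.sum_congr rfl fun i _ => integral_finsetSum _ fun q _ =>
    integrable_of_continuous_gaugeField (continuous_loopProd _), ← integral_finsetSum _ fun i _ =>
    integrable_finsetSum _ fun q _ => integrable_of_continuous_gaugeField (continuous_loopProd _)]
  simp only [pow_succ', Fintype.sum_pow, loopProd_cons, loopProd_map_val, Function.comp_apply,
    Finset.sum_mul_sum]

variable [DecidableEq E] {μ : ∀ N : ℕ, Measure (GaugeField E N)}
  [∀ N, IsProbabilityMeasure (μ N)] [∀ N, (μ N).IsMulLeftInvariant]

lemma isBigO_integral_sum_loopTrace_pow_succ (hp : ∀ i, FreeGroup.mk (p i) ≠ 1)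
    {k₀ : ∀ i, Fin (p i).length} (hk₀ : ∀ i, IsPivot (p i) (k₀ i)) (m : ℕ) :
    (fun N => ∫ U, (∑ i, loopTrace U (p i)) ^ (m + 1) ∂(μ N) -
      ∑ i, ∑ q : Fin m → ι, ∑ j, contraction (p i) (k₀ i) (p (q j)) *
        loopExpectation (μ N) ((Finset.univ.erase j).val.map (p ∘ q)))
      =O[atTop] (fun N : ℕ => (N : ℝ)⁻¹) := by
  simp only [integral_sum_loopTrace_pow_succ, ← Finset.sum_sub_distrib]
  exact .fun_sum fun i _ => .fun_sum fun q _ =>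
    isBigO_loopExpectation_sub_contraction (hk₀ i) fun j _ => hp (q j)

theorem isBigO_integral_sum_loopTrace_pow_sub_gaussianMoment (hp : ∀ i, FreeGroup.mk (p i) ≠ 1)
    {k₀ : ∀ i, Fin (p i).length} (hk₀ : ∀ i, IsPivot (p i) (k₀ i)) {c : ℝ}
    (hc : ∑ i, ∑ j, contraction (p i) (k₀ i) (p j) = c) (l : ℕ) :
    (fun N => ∫ U, (∑ i, loopTrace U (p i)) ^ l ∂(μ N) - gaussianMoment c l)
      =O[atTop] (fun N : ℕ => (N : ℝ)⁻¹) := by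
  refine isBigO_sub_gaussianMoment (a := fun l N => ∫ U, (∑ i, loopTrace U (p i)) ^ l ∂(μ N))
    (by simp) ?_ (fun m => ?_) l
  · simpa using isBigO_integral_sum_loopTrace_pow_succ (μ := μ) hp hk₀ 0
  · refine (isBigO_integral_sum_loopTrace_pow_succ (μ := μ) hp hk₀ (m + 1)).congr_left fun N => ?_
    rw [Finset.sum_congr rfl fun i _ => sum_sum_mul_map_erase p
      (fun j => contraction (p i) (k₀ i) (p j)) (loopExpectation (μ N)) m,
      ← integral_sum_loopTrace_pow, ← Finset.sum_mul, ← Finset.mul_sum, hc]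
    ring

end Moments

section Lattice

lemma sum_subtype_ne_eq_sum_lt {α M : Type*} [Fintype α] [LinearOrder α] [AddCommMonoid M]
    (f : α × α → M) :
    ∑ q : {q : α × α // q.1 ≠ q.2}, f q = ∑ q : α × α with q.1 < q.2, (f q + f q.swap) := by
  have hgt : ∑ q : α × α with q.2 < q.1, f q = ∑ q : α × α with q.1 < q.2, f q.swap := by
    refine (Finset.sum_equiv (Equiv.prodComm α α) ?_ ?_).symm <;> simp
  have hne : (univ.filter fun q : α × α => q.1 ≠ q.2) =
      (univ.filter fun q => q.1 < q.2) ∪ univ.filter fun q => q.2 < q.1 := by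
    rw [← Finset.filter_or]
    exact Finset.filter_congr fun q _ => ne_iff_lt_or_gt
  have hdisj : Disjoint (univ.filter fun q : α × α => q.1 < q.2)
      (univ.filter fun q => q.2 < q.1) :=
    Finset.disjoint_filter.2 fun q _ => lt_asymm
  rw [← Finset.sum_subtype (univ.filter fun q : α × α => q.1 ≠ q.2) (by simp) f, hne,
    Finset.sum_union hdisj, hgt, Finset.sum_add_distrib]

variable {D L : ℕ}

/-- The boundary of the plaquette at `x` spanned by the directions `μ` and `ν`. -/
def plaquette (x : Site D L) (μ ν : Fin D) : Word (Edge D L) :=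
  [((x, μ), true), ((x, ν), false), ((shift x ν, μ), false), ((shift x μ, ν), true)]

lemma length_plaquette (x : Site D L) (μ ν : Fin D) : (plaquette x μ ν).length = 4 := rfl

instance neZero_length_plaquette (x : Site D L) (μ ν : Fin D) :
    NeZero (plaquette x μ ν).length :=
  ⟨by simp [length_plaquette]⟩

lemma isReduced_plaquette (x : Site D L) {μ ν : Fin D} (h : μ ≠ ν) :
    FreeGroup.IsReduced (plaquette x μ ν) := by
  simp [plaquette, FreeGroup.isReduced_cons_cons, h, h.symm]

lemma isPivot_plaquette (x : Site D L) {μ ν : Fin D} (h : μ ≠ ν) :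
    IsPivot (plaquette x μ ν) 0 where
  cut_eq_nil := Or.inl rfl
  mk_cut_ne_one k hk he := by
    -- For `L = 1` opposite edges coincide, so the third letter may have the edge of the first.
    obtain rfl : k = (2 : Fin 4) := by
      change Fin 4 at k
      change k ≠ (0 : Fin 4) at hk
      change (plaquette x μ ν)[(k : ℕ)].1 = (x, μ) at he
      fin_cases k <;> simp_all [plaquette]
    constructor <;>
      exact mk_ne_one_of_isReduced
        (by simp [plaquette, cutLeft, cutRight, cutPos, FreeGroup.isReduced_cons_cons, h, h.symm])
        (by simp [plaquette, cutLeft, cutRight, cutPos])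

lemma mk_splice_plaquette_eq_one_iff (x y : Site D L) {μ ν ρ σ : Fin D} (h : μ ≠ ν) (h' : ρ ≠ σ)
    (k : Fin (plaquette y ρ σ).length) :
    FreeGroup.mk (splice (plaquette y ρ σ) k (plaquette x μ ν)) = 1 ↔
      (k : ℕ) = 1 ∧ y = x ∧ ρ = ν ∧ σ = μ := by
  rw [mk_splice_eq_one_iff (isReduced_plaquette x h)]
  · change Fin 4 at k
    fin_cases k <;> simp [plaquette, cutLeft, cutRight, cutPos, FreeGroup.invRev]
    grind
  · change Fin 4 at k
    fin_cases k <;>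
      simp [plaquette, cutLeft, cutRight, cutPos, FreeGroup.invRev, FreeGroup.isReduced_cons_cons,
        h', h'.symm]

lemma contraction_plaquette (x y : Site D L) {μ ν ρ σ : Fin D} (h : μ ≠ ν) (h' : ρ ≠ σ) :
    contraction (plaquette x μ ν) 0 (plaquette y ρ σ) =
      if y = x ∧ ρ = ν ∧ σ = μ then 1 else 0 := by
  have hpivot : (plaquette x μ ν)[(0 : Fin (plaquette x μ ν).length)] = ((x, μ), true) := rfl
  simp only [contraction, mk_splice_plaquette_eq_one_iff x y h h', hpivot]
  by_cases hc : y = x ∧ ρ = ν ∧ σ = μ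
  · obtain ⟨rfl, rfl, rfl⟩ := hc
    rw [Finset.sum_eq_single ⟨1, by simp [length_plaquette]⟩]
    · simp [plaquette, letterSign]
    · simp +contextual [Fin.ext_iff]
    · simp
  · simp [hc]

/-- The plaquettes of the lattice, each with its two orientations. -/
abbrev OrientedPlaquette (D L : ℕ) := Site D L × {q : Fin D × Fin D // q.1 ≠ q.2}

/-- The boundary of an oriented plaquette. -/
abbrev OrientedPlaquette.loop (i : OrientedPlaquette D L) : Word (Edge D L) :=
  plaquette i.1 i.2.1.1 i.2.1.2

lemma card_orientedPlaquette (D L : ℕ) [NeZero L] :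
    (Fintype.card (OrientedPlaquette D L) : ℝ) = L ^ D * (D * (D - 1)) := by
  have hdiag : Fintype.card {q : Fin D × Fin D // q.1 = q.2} = D := by
    simp [Fintype.card_congr (Equiv.subtypeProdEquivSigmaSubtype _)]
  have h := Fintype.card_subtype_compl (fun q : Fin D × Fin D => q.1 = q.2)
  rw [hdiag, Fintype.card_prod, Fintype.card_fin] at h
  rw [Fintype.card_prod, Fintype.card_pi, h]
  simp only [ZMod.card, Finset.prod_const, Finset.card_univ, Fintype.card_fin]
  rw [Nat.cast_mul, Nat.cast_sub (Nat.le_mul_self D)]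
  push_cast
  ring

lemma sum_sum_contraction_orientedPlaquette [NeZero L] :
    ∑ i : OrientedPlaquette D L, ∑ j : OrientedPlaquette D L,
      contraction i.loop 0 j.loop = (Fintype.card (OrientedPlaquette D L) : ℝ) := by
  have hreverse (i j : OrientedPlaquette D L) :
      (j.1 = i.1 ∧ j.2.1.1 = i.2.1.2 ∧ j.2.1.2 = i.2.1.1) ↔
        j = (i.1, ⟨i.2.1.swap, i.2.2.symm⟩) := by
    simp [Prod.ext_iff, Subtype.ext_iff]
  have hcontr (i j : OrientedPlaquette D L) : contraction i.loop 0 j.loop =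
      if j = (i.1, ⟨i.2.1.swap, i.2.2.symm⟩) then 1 else 0 := by
    simp only [OrientedPlaquette.loop]
    rw [contraction_plaquette _ _ i.2.2 j.2.2]
    simp only [hreverse]
  simp [hcontr]

lemma loopTrace_plaquette {N : ℕ} (U : Conf D L N) (x : Site D L) (μ ν : Fin D) :
    loopTrace U (plaquette x μ ν) =
      Matrix.trace ((U (x, ν) : Matrix (Fin N) (Fin N) ℂ)ᴴ
          * (U (shift x ν, μ) : Matrix (Fin N) (Fin N) ℂ)ᴴ
          * (U (shift x μ, ν) : Matrix (Fin N) (Fin N) ℂ)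
          * (U (x, μ) : Matrix (Fin N) (Fin N) ℂ)) := by
  rw [Matrix.trace_mul_comm, loopTrace, plaquette, holonomy_cons, holonomy_cons _ _ [_, _],
    holonomy_cons _ _ [_]]
  simp only [holonomy_singleton_true, holonomy_singleton_false, mul_assoc]

lemma loopTrace_plaquette_swap {N : ℕ} (U : Conf D L N) (x : Site D L) (μ ν : Fin D) :
    loopTrace U (plaquette x ν μ) = star (loopTrace U (plaquette x μ ν)) := by
  rw [loopTrace_plaquette, loopTrace_plaquette, ← Matrix.trace_conjTranspose]
  simp only [Matrix.conjTranspose_mul, Matrix.conjTranspose_conjTranspose, mul_assoc]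

variable [NeZero L] {N : ℕ}

lemma sum_loopTrace_orientedPlaquette (hN : N ≠ 0) (U : Conf D L N) :
    ∑ i : OrientedPlaquette D L, loopTrace U i.loop =
      ((2 * L ^ D * (N * wilsonAction D L N U) : ℝ) : ℂ) := by
  have hsite (x : Site D L) :
      ∑ q : {q : Fin D × Fin D // q.1 ≠ q.2}, loopTrace U (plaquette x q.1.1 q.1.2) =
        ((∑ q : Fin D × Fin D with q.1 < q.2,
          2 * (loopTrace U (plaquette x q.1 q.2)).re : ℝ) : ℂ) := by
    rw [sum_subtype_ne_eq_sum_lt fun q => loopTrace U (plaquette x q.1 q.2), Complex.ofReal_sum]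
    refine Finset.sum_congr rfl fun q _ => ?_
    rw [Prod.fst_swap, Prod.snd_swap, loopTrace_plaquette_swap U x q.1 q.2]
    exact Complex.add_conj _
  have hL : (L : ℝ) ≠ 0 := Nat.cast_ne_zero.2 (NeZero.ne L)
  have hN' : (N : ℝ) ≠ 0 := Nat.cast_ne_zero.2 hN
  simp only [OrientedPlaquette.loop, Fintype.sum_prod_type, hsite]
  rw [← Complex.ofReal_sum, wilsonAction]
  congr 1
  simp only [← loopTrace_plaquette, ← Finset.mul_sum]
  field_simp

lemma continuous_wilsonAction (D L N : ℕ) [NeZero L] : Continuous (wilsonAction D L N) := by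
  unfold wilsonAction
  simp only [← loopTrace_plaquette]
  exact continuous_const.mul <| continuous_finsetSum _ fun x _ => continuous_finsetSum _ fun q _ =>
    continuous_const.mul (Complex.continuous_re.comp (continuous_loopTrace _))

lemma integral_sum_loopTrace_orientedPlaquette_pow (P : Measure (Conf D L N)) (hN : N ≠ 0)
    (l : ℕ) :
    ∫ U, (∑ i : OrientedPlaquette D L, loopTrace U i.loop) ^ l ∂P =
      (((2 * L ^ D) ^ l * (N ^ l * ∫ t, t ^ l ∂(P.map (wilsonAction D L N))) : ℝ) : ℂ) := by
  rw [integral_map (continuous_wilsonAction D L N).aemeasurable (by fun_prop), ← mul_assoc,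
    ← integral_const_mul, ← integral_complex_ofReal]
  congr 1
  funext U
  rw [sum_loopTrace_orientedPlaquette hN]
  push_cast
  ring

theorem isBigO_integral_map_wilsonAction_pow_sub {P : ∀ N : ℕ, Measure (Conf D L N)}
    [∀ N, IsProbabilityMeasure (P N)] [∀ N, (P N).IsMulLeftInvariant] (l : ℕ) :
    (fun N : ℕ => (N : ℝ) ^ l * (∫ t, t ^ l ∂((P N).map (wilsonAction D L N))) -
      gaussianMoment (((4 * L ^ D : ℝ) / (D * (D - 1)))⁻¹) l)
      =O[atTop] (fun N : ℕ => (N : ℝ)⁻¹) := by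
  have hK : (2 * L ^ D : ℝ) ≠ 0 :=
    mul_ne_zero two_ne_zero (pow_ne_zero _ (Nat.cast_ne_zero.2 (NeZero.ne L)))
  have hcard : (Fintype.card (OrientedPlaquette D L) : ℝ) =
      (2 * L ^ D) ^ 2 * ((4 * L ^ D : ℝ) / (D * (D - 1)))⁻¹ := by
    rw [card_orientedPlaquette, inv_div]
    field_simp
    ring
  have hred (i : OrientedPlaquette D L) := isReduced_plaquette i.1 i.2.2
  have hO := isBigO_integral_sum_loopTrace_pow_sub_gaussianMoment (μ := P)
    (fun i => mk_ne_one_of_isReduced (hred i) (List.cons_ne_nil _ _))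
    (fun i => isPivot_plaquette i.1 i.2.2) sum_sum_contraction_orientedPlaquette l
  have hscaled := (hO.const_mul_left ((((2 * L ^ D) ^ l : ℝ) : ℂ)⁻¹)).norm_left
  refine Asymptotics.IsBigO.of_norm_left (hscaled.congr' ?_ EventuallyEq.rfl)
  filter_upwards [eventually_ne_atTop 0] with N hN
  rw [integral_sum_loopTrace_orientedPlaquette_pow (P N) hN l, hcard, gaussianMoment_sq_mul,
    ← Complex.ofReal_sub, ← Complex.ofReal_inv, ← Complex.ofReal_mul,
    Complex.norm_real, ← mul_sub, inv_mul_cancel_left₀ (pow_ne_zero l hK)]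

end Lattice

lemma exists_pos_forall_abs_le_div_of_isBigO_inv {f : ℕ → ℝ}
    (hf : f =O[atTop] (fun N : ℕ => (N : ℝ)⁻¹)) :
    ∃ C > (0 : ℝ), ∃ N₀ : ℕ, ∀ N ≥ N₀, |f N| ≤ C / N := by
  obtain ⟨C, hC, hbound⟩ := hf.exists_pos
  obtain ⟨N₀, hN₀⟩ := eventually_atTop.1 hbound.bound
  exact ⟨C, hC, N₀, fun N hN => by simpa [div_eq_mul_inv] using hN₀ N hN⟩

/-- **Moment asymptotics for the pushforward of Haar measure by the Wilson action.**
With `K = L^D`, `m_l = 0` for odd `l` and `m_l = (l-1)‼ / (4K/(D(D-1)))^(l/2)` for even `l`,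
the `l`-th moment of `ρ_N` satisfies `∫ t^l dρ_N = m_l/N^l + O(1/N^(l+1))`: there are a
constant `C > 0` and an `N₀` with `|N^l ∫ t^l dρ_N − m_l| ≤ C/N` for all `N ≥ N₀`. -/
theorem wilson_moment_asymptotic
    (D L : ℕ) [NeZero L] (hD : 2 ≤ D) (hL : 1 ≤ L)
    (haarU : ∀ N : ℕ, Measure (Matrix.unitaryGroup (Fin N) ℂ))
    [∀ N, (haarU N).IsHaarMeasure] [∀ N, IsProbabilityMeasure (haarU N)]
    (l : ℕ) (hl : 1 ≤ l) :
    ∃ C > (0 : ℝ), ∃ N₀ : ℕ, ∀ N ≥ N₀,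
      |(N : ℝ) ^ l *
          (∫ t, t ^ l ∂((confMeasure D L N (haarU N)).map (wilsonAction D L N))) -
        (if Odd l then 0
          else ((l - 1)‼ : ℝ) / ((4 * L ^ D : ℝ) / ((D : ℝ) * ((D : ℝ) - 1))) ^ (l / 2))| ≤
      C / N := by
  have hprob (N : ℕ) : IsProbabilityMeasure (confMeasure D L N (haarU N)) :=
    inferInstanceAs (IsProbabilityMeasure (Measure.pi fun _ => haarU N))
  have hinv (N : ℕ) : (confMeasure D L N (haarU N)).IsMulLeftInvariant :=
    inferInstanceAs (Measure.pi fun _ => haarU N).IsMulLeftInvariant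
  have hO := isBigO_integral_map_wilsonAction_pow_sub (P := fun N => confMeasure D L N (haarU N)) l
  simpa only [gaussianMoment, inv_pow, ← div_eq_mul_inv] using
    exists_pos_forall_abs_le_div_of_isBigO_inv hO

end
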